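/- Let G be a Δ-regular graph with 3 ≤ Δ and n ≥ Δ+2 vertices, G connected, admitting a frozen (Δ+1)-colouring. Then the proportion of frozen colourings among all proper (Δ+1)-colourings of G is at most (6/7)^{n/(Δ+1)}. -/

import Mathlib

open Finset in
/-- Fibrewise double counting for an equivalence relation. -/
theorem aux_fiber {X : Type*} [DecidableEq X] (A B : Finset X)
    (r : X → X → Prop) [DecidableRel r] (hr : Equivalence r) (w : X → ℝ)
    (hw : ∀ a ∈ A, w a * ((A.filter (r a)).card : ℝ) ≤ ((B.filter (r a)).card : ℝ)) :
    ∑ a ∈ A, w a ≤ (B.card : ℝ) := by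
  have key : ∀ a b, r a b → A.filter (r a) = A.filter (r b) := by
    intro a b hab
    ext x
    simp only [mem_filter, and_congr_right_iff]
    intro _
    exact ⟨fun h => hr.trans (hr.symm hab) h, fun h => hr.trans hab h⟩
  have h1 : ∀ a ∈ A, w a ≤ ∑ b ∈ B, if r a b then (1 : ℝ) / ((A.filter (r b)).card : ℝ) else 0 := by
    intro a ha
    have hpos : (0 : ℝ) < ((A.filter (r a)).card : ℝ) := by
      have : 0 < (A.filter (r a)).card := card_pos.mpr ⟨a, by simp [ha, hr.refl a]⟩
      exact_mod_cast this
    rw [← Finset.sum_filter]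
    have : ∑ b ∈ B.filter (r a), (1 : ℝ) / ((A.filter (r b)).card : ℝ)
        = ∑ b ∈ B.filter (r a), (1 : ℝ) / ((A.filter (r a)).card : ℝ) := by
      apply Finset.sum_congr rfl
      intro b hb
      rw [key a b (mem_filter.mp hb).2]
    rw [this, Finset.sum_const, nsmul_eq_mul, mul_one_div, le_div_iff₀ hpos]
    exact hw a ha
  calc ∑ a ∈ A, w a ≤ ∑ a ∈ A, ∑ b ∈ B, (if r a b then (1 : ℝ) / ((A.filter (r b)).card : ℝ) else 0) :=
        Finset.sum_le_sum h1
    _ = ∑ b ∈ B, ∑ a ∈ A, (if r a b then (1 : ℝ) / ((A.filter (r b)).card : ℝ) else 0) :=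
        Finset.sum_comm
    _ ≤ ∑ b ∈ B, (1 : ℝ) := by
        apply Finset.sum_le_sum
        intro b _
        rw [← Finset.sum_filter, Finset.sum_const, nsmul_eq_mul]
        have : A.filter (fun a => r a b) = A.filter (r b) := by
          ext x
          simp only [mem_filter, and_congr_right_iff]
          intro _
          exact ⟨fun h => hr.symm h, fun h => hr.symm h⟩
        rw [this, mul_one_div]
        exact div_self_le_one _
    _ = (B.card : ℝ) := by simp

open Finset in
/-- Counting classes closed under a fixed-point-free involution. -/
theorem aux_count {E B : Type*} [DecidableEq E] [DecidableEq B] (W T : Finset E) (p : E → E)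
    (hTW : T ⊆ W)
    (hpW : ∀ v ∈ W, p v ∈ W) (hpp : ∀ v, p (p v) = v) (hne : ∀ v ∈ W, p v ≠ v)
    (k : E → B) (hk : ∀ v ∈ W, k (p v) = k v)
    (hT : ∀ v ∈ T, ∃ w ∈ W, k w = k v ∧ w ≠ v ∧ w ≠ p v) :
    4 * (W.image k).card + T.card ≤ 2 * W.card := by
  have hW : W.card = ∑ q ∈ W.image k, (W.filter (fun v => k v = q)).card :=
    Finset.card_eq_sum_card_image k W
  have hTc : T.card = ∑ q ∈ W.image k, (T.filter (fun v => k v = q)).card :=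
    Finset.card_eq_sum_card_fiberwise (fun x hx => mem_image_of_mem k (hTW hx))
  have hsub : ∀ q, (T.filter (fun v => k v = q)).card ≤ (W.filter (fun v => k v = q)).card :=
    fun q => card_le_card (filter_subset_filter _ hTW)
  have hq : ∀ q ∈ W.image k, 4 + (T.filter (fun v => k v = q)).card
      ≤ 2 * (W.filter (fun v => k v = q)).card := by
    intro q hq
    have hs := hsub q
    by_cases hne' : (T.filter (fun v => k v = q)).Nonempty
    · obtain ⟨v, hv⟩ := hne'
      obtain ⟨hvT, hvq⟩ := mem_filter.mp hv
      obtain ⟨w, hwW, hkw, hwv, hwp⟩ := hT v hvT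
      have hvW := hTW hvT
      have hsubset : ({v, p v, w, p w} : Finset E) ⊆ W.filter (fun v => k v = q) := by
        intro x hx
        simp only [mem_insert, mem_singleton] at hx
        rcases hx with rfl | rfl | rfl | rfl
        · simp [hvW, hvq]
        · simp [hpW _ hvW, hk _ hvW, hvq]
        · simp [hwW, hkw, hvq]
        · simp [hpW _ hwW, hk _ hwW, hkw, hvq]
      have h1 : v ≠ p v := (hne v hvW).symm
      have h2 : v ≠ w := hwv.symm
      have h3 : v ≠ p w := fun h => hwp (by rw [h, hpp])
      have h4 : p v ≠ w := hwp.symm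
      have h5 : p v ≠ p w := fun h => h2 (by rw [← hpp v, h, hpp])
      have h6 : w ≠ p w := (hne w hwW).symm
      have hc : ({v, p v, w, p w} : Finset E).card = 4 := by
        simp [h1, h2, h3, h4, h5, h6]
      have := card_le_card hsubset
      omega
    · rw [not_nonempty_iff_eq_empty] at hne'
      rw [hne']
      obtain ⟨v, hvW, hvq⟩ := mem_image.mp hq
      have hsubset : ({v, p v} : Finset E) ⊆ W.filter (fun v => k v = q) := by
        intro x hx
        simp only [mem_insert, mem_singleton] at hx
        rcases hx with rfl | rfl
        · simp [hvW, hvq]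
        · simp [hpW _ hvW, hk _ hvW, hvq]
      have hc : ({v, p v} : Finset E).card = 2 := card_pair (hne v hvW).symm
      have := card_le_card hsubset
      simp only [card_empty]
      omega
  have := Finset.sum_le_sum hq
  rw [Finset.sum_add_distrib, Finset.sum_const, smul_eq_mul, ← hTc, ← Finset.mul_sum, ← hW] at this
  omega

/-- Proper colourings. -/
def AuxProper {V : Type*} (G : SimpleGraph V) {Δ : ℕ} (α : V → Fin (Δ + 1)) : Prop :=
  ∀ u v, G.Adj u v → α u ≠ α v

/-- The rainbow condition. -/
def AuxFull {V : Type*} (G : SimpleGraph V) {Δ : ℕ} (α : V → Fin (Δ + 1)) : Prop :=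
  ∀ v c, ∃ u, (u = v ∨ G.Adj v u) ∧ α u = c

open Finset in
theorem aux_inj {V : Type*} [Fintype V] [DecidableEq V] (G : SimpleGraph V)
    [DecidableRel G.Adj] (Δ : ℕ) (hreg : ∀ v, G.degree v = Δ) (α : V → Fin (Δ + 1))
    (h : AuxFull G α) (x y z : V) (hy : y = x ∨ G.Adj x y) (hz : z = x ∨ G.Adj x z)
    (hyz : α y = α z) : y = z := by
  have hcard : (insert x (G.neighborFinset x)).card = Δ + 1 := by
    rw [card_insert_of_notMem (by simp), G.card_neighborFinset_eq_degree, hreg]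
  have him : (insert x (G.neighborFinset x)).image α = univ := by
    ext c
    simp only [mem_image, mem_univ, iff_true]
    obtain ⟨u, hu, hc⟩ := h x c
    exact ⟨u, by simpa using hu, hc⟩
  have hinj : Set.InjOn α (insert x (G.neighborFinset x) : Finset V) := by
    rw [← card_image_iff, him, hcard]; simp
  exact hinj (by simpa using hy) (by simpa using hz) hyz

open Finset in
open Classical in
/-- The local ratio bound inside one class of colourings. -/
theorem aux_local {V : Type*} [Fintype V] [DecidableEq V] (G : SimpleGraph V)
    [DecidableRel G.Adj] (Δ : ℕ) (hreg : ∀ v, G.degree v = Δ) (c : Fin (Δ + 1))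
    (α : V → Fin (Δ + 1)) (hαp : AuxProper G α) (hαf : AuxFull G α)
    (T : Finset V)
    (hT : ∀ v ∈ T, ∃ u x, G.Adj v u ∧ α v + α u = c ∧ G.Adj v x ∧ x ≠ u ∧ ¬ G.Adj u x)
    (A B : Finset (V → Fin (Δ + 1)))
    (hA : ∀ β, β ∈ A ↔ (AuxProper G β ∧ AuxFull G β) ∧ ∀ v, β v = α v ∨ β v = c - α v)
    (hB : ∀ β, β ∈ B ↔ AuxProper G β ∧ ∀ v, β v = α v ∨ β v = c - α v) :
    ∃ q r : ℕ, A.card ≤ 2 ^ q ∧ 2 ^ r ≤ B.card ∧ 4 * q + T.card ≤ 4 * r := by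
  choose p hpN hpc using fun v => hαf v (c - α v)
  have hpp : ∀ v, p (p v) = v := by
    intro v
    refine aux_inj G Δ hreg α hαf (p v) _ _ (hpN _) ?_ ?_
    · rcases hpN v with h | h
      · exact Or.inl h.symm
      · exact Or.inr h.symm
    · rw [hpc, hpc]; abel
  set W : Finset V := univ.filter (fun v => c - α v ≠ α v) with hWdef
  have hpW : ∀ v ∈ W, p v ∈ W := by
    intro v hv
    simp only [hWdef, mem_filter, mem_univ, true_and] at hv ⊢
    rw [hpc, sub_sub_cancel]
    exact hv.symm
  have hne : ∀ v ∈ W, p v ≠ v := by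
    intro v hv h
    simp only [hWdef, mem_filter, mem_univ, true_and] at hv
    apply hv
    rw [← hpc, h]
  have hadj : ∀ v ∈ W, G.Adj v (p v) := fun v hv => (hpN v).resolve_left (hne v hv)
  let k : V → Finset (V → Fin (Δ + 1)) := fun v => A.filter (fun β => β v = α v)
  have pair : ∀ v w, α w = c - α v → (∀ β ∈ A, β v ≠ β w) → k w = k v := by
    intro v w hw hb
    ext β
    simp only [k, mem_filter, and_congr_right_iff]
    intro hβ
    have h1 := hb β hβ
    have h2 := ((hA β).1 hβ).2 v
    have h3 := ((hA β).1 hβ).2 w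
    rw [hw, sub_sub_cancel] at h3
    rw [hw]
    constructor
    · intro h
      rcases h2 with h2 | h2
      · exact h2
      · exact absurd (h2.trans h.symm) h1
    · intro h
      rcases h3 with h3 | h3
      · exact h3
      · exact absurd (h.trans h3.symm) h1
  have hk : ∀ v ∈ W, k (p v) = k v := by
    intro v hv
    exact pair v (p v) (hpc v) (fun β hβ => ((hA β).1 hβ).1.1 _ _ (hadj v hv))
  have hTW : T ⊆ W := by
    intro v hv
    obtain ⟨u, x, hvu, hc, -⟩ := hT v hv
    simp only [hWdef, mem_filter, mem_univ, true_and]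
    rw [← hc, add_sub_cancel_left]
    exact (hαp _ _ hvu).symm
  have hT' : ∀ v ∈ T, ∃ w ∈ W, k w = k v ∧ w ≠ v ∧ w ≠ p v := by
    intro v hv
    have hvW := hTW hv
    obtain ⟨u, x, hvu, hc, hvx, hxu, hux⟩ := hT v hv
    have hu : p v = u := by
      refine aux_inj G Δ hreg α hαf v _ _ (hpN _) (Or.inr hvu) ?_
      rw [hpc, ← hc, add_sub_cancel_left]
    obtain ⟨y, hy, hyc⟩ := hαf x (c - α v)
    have hyW : y ∈ W := by
      have := hpW v hvW
      simp only [hWdef, mem_filter, mem_univ, true_and] at this ⊢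
      rw [hpc] at this
      rwa [hyc]
    have hyv : y ≠ v := by
      rintro rfl
      simp only [hWdef, mem_filter, mem_univ, true_and] at hvW
      exact hvW hyc.symm
    refine ⟨y, hyW, ?_, hyv, ?_⟩
    · apply pair v y hyc
      intro β hβ hEq
      exact hyv (aux_inj G Δ hreg β ((hA β).1 hβ).1.2 x _ _ hy (Or.inr hvx.symm) hEq.symm)
    · rw [hu]
      rintro rfl
      rcases hy with h | h
      · exact hxu h.symm
      · exact hux h.symm
  have hcount := aux_count W T p hTW hpW hpp hne k hk hT'
  set R : Finset V := W.filter (fun v => α v < α (p v)) with hRdef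
  have hWR : W.card ≤ 2 * R.card := by
    have h1 : W = R ∪ R.image p := by
      ext v
      simp only [mem_union, mem_image]
      constructor
      · intro hv
        rcases lt_trichotomy (α v) (α (p v)) with h | h | h
        · exact Or.inl (mem_filter.2 ⟨hv, h⟩)
        · exact absurd h (hαp _ _ (hadj v hv))
        · exact Or.inr ⟨p v, mem_filter.2 ⟨hpW v hv, by rwa [hpp]⟩, hpp v⟩
      · rintro (h | ⟨a, ha, rfl⟩)
        · exact (mem_filter.1 h).1
        · exact hpW _ (mem_filter.1 ha).1
    calc W.card = (R ∪ R.image p).card := by rw [← h1]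
      _ ≤ R.card + (R.image p).card := card_union_le _ _
      _ ≤ R.card + R.card := by exact Nat.add_le_add_left card_image_le _
      _ = 2 * R.card := by ring
  refine ⟨(W.image k).card, R.card, ?_, ?_, by omega⟩
  · rw [← card_powerset]
    apply Finset.card_le_card_of_injOn (fun β : V → Fin (Δ + 1) => (W.image k).filter (fun q => β ∈ q))
    · intro β _
      exact mem_powerset.2 (filter_subset _ _)
    · intro β hβ γ hγ h
      have hβ' : β ∈ A := hβ
      have hγ' : γ ∈ A := hγ
      funext v
      by_cases hv : v ∈ W
      · have hm : β ∈ k v ↔ γ ∈ k v := by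
          have := congrArg (fun s => k v ∈ s) h
          simpa [mem_filter, mem_image_of_mem k hv] using this
        simp only [k, mem_filter, hβ', hγ', true_and] at hm
        rcases ((hA β).1 hβ').2 v with h1 | h1
        · rw [h1, hm.1 h1]
        · rcases ((hA γ).1 hγ').2 v with h2 | h2
          · rw [h2, hm.2 h2]
          · rw [h1, h2]
      · have hv' : c - α v = α v := by
          simpa [hWdef] using hv
        have h1 := ((hA β).1 hβ').2 v
        have h2 := ((hA γ).1 hγ').2 v
        rw [hv', or_self] at h1 h2
        rw [h1, h2]
  · rw [← card_powerset]
    let Φ : Finset V → V → Fin (Δ + 1) :=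
      fun S v => if v ∈ S ∨ p v ∈ S then c - α v else α v
    have hΦp : ∀ S v, Φ S v ≠ α v → Φ S v = c - α v := by
      intro S v h
      by_cases h' : v ∈ S ∨ p v ∈ S
      · simp [Φ, h']
      · simp [Φ, h'] at h
    apply Finset.card_le_card_of_injOn Φ
    · intro S hS
      refine (hB _).2 ⟨?_, ?_⟩
      · intro u v huv hEq
        by_cases hpv : v = p u
        · subst hpv
          have hiff : (p u ∈ S ∨ p (p u) ∈ S) ↔ (u ∈ S ∨ p u ∈ S) := by rw [hpp]; exact or_comm
          have hne' := hαp _ _ huv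
          simp only [Φ, hiff, hpc, sub_sub_cancel] at hEq
          rw [hpc] at hne'
          split_ifs at hEq
          · exact hne' hEq.symm
          · exact hne' hEq
        · have hne' := hαp _ _ huv
          have h2 : α v ≠ c - α u := by
            intro h
            apply hpv
            exact aux_inj G Δ hreg α hαf u _ _ (Or.inr huv) (hpN u) (by rw [h, hpc])
          have h3 : α u ≠ c - α v := by
            intro h
            apply h2
            rw [h, sub_sub_cancel]
          simp only [Φ] at hEq
          split_ifs at hEq
          · exact hne' (sub_right_injective hEq)
          · exact h2 hEq.symm
          · exact h3 hEq
          · exact hne' hEq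
      · intro v
        by_cases h : Φ S v = α v
        · exact Or.inl h
        · exact Or.inr (hΦp S v h)
    · have hchar : ∀ S ⊆ R, ∀ v ∈ R, (v ∈ S ↔ Φ S v ≠ α v) := by
        intro S hS v hv
        obtain ⟨hvW, hlt⟩ := mem_filter.1 hv
        have hpR : p v ∉ S := by
          intro h
          have := (mem_filter.1 (hS h)).2
          rw [hpp] at this
          exact absurd this (not_lt.2 hlt.le)
        have hvne : c - α v ≠ α v := by simpa [hWdef] using hvW
        by_cases h : v ∈ S
        · simp [Φ, h, hvne]
        · simp [Φ, h, hpR]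
      intro S hS S' hS' hEq
      have hS1 : S ⊆ R := by simpa using hS
      have hS2 : S' ⊆ R := by simpa using hS'
      ext v
      constructor
      · intro h
        rw [hchar S' hS2 v (hS1 h), ← hEq]
        exact (hchar S hS1 v (hS1 h)).1 h
      · intro h
        rw [hchar S hS1 v (hS2 h), hEq]
        exact (hchar S' hS2 v (hS2 h)).1 h

/-- Every vertex has two distinct nonadjacent neighbours. -/
theorem aux_nonadj {V : Type*} [Fintype V] [DecidableEq V] (G : SimpleGraph V)
    [DecidableRel G.Adj] (Δ : ℕ) (hn : Δ + 2 ≤ Fintype.card V)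
    (hreg : ∀ v, G.degree v = Δ) (hconn : G.Connected) (v : V) :
    ∃ a b, G.Adj v a ∧ G.Adj v b ∧ a ≠ b ∧ ¬ G.Adj a b := by
  by_contra! hcon
  have hcard : (insert v (G.neighborFinset v)).card = Δ + 1 := by
    rw [Finset.card_insert_of_notMem (by simp), G.card_neighborFinset_eq_degree, hreg]
  have hsame : ∀ a, G.Adj v a → insert v (G.neighborFinset v) = insert a (G.neighborFinset a) := by
    intro a ha
    apply Finset.eq_of_subset_of_card_le
    · intro x hx
      simp only [Finset.mem_insert, SimpleGraph.mem_neighborFinset] at hx ⊢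
      rcases hx with rfl | hx
      · exact Or.inr ha.symm
      · by_cases hxa : x = a
        · exact Or.inl hxa
        · exact Or.inr (hcon a x ha hx (Ne.symm hxa))
    · rw [hcard, Finset.card_insert_of_notMem (by simp), G.card_neighborFinset_eq_degree, hreg]
  have hwalk : ∀ x, G.Reachable v x → x ∈ insert v (G.neighborFinset v) := by
    intro x hx
    rw [SimpleGraph.reachable_iff_reflTransGen] at hx
    induction hx with
    | refl => simp
    | @tail b d _ hbc ih =>
      rcases Finset.mem_insert.1 ih with rfl | hb
      · simp [hbc]
      · rw [hsame b (by simpa using hb)]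
        simp [hbc]
  have : (Finset.univ : Finset V) ⊆ insert v (G.neighborFinset v) :=
    fun x _ => hwalk x (hconn.preconnected v x)
  have := Finset.card_le_card this
  rw [hcard, Finset.card_univ] at this
  omega

open Finset in
/-- Convexity step. -/
theorem aux_jensen (Δ n : ℕ) (t : Fin (Δ + 1) → ℕ) (ht : 2 * n ≤ ∑ c, t c) :
    ((Δ : ℝ) + 1) * ((7 : ℝ) / 6) ^ (n / (Δ + 1)) ≤ ∑ c, Real.exp (Real.log 2 * t c / 4) := by
  set L : ℝ := Real.log 2 * n / (2 * (Δ + 1)) with hL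
  have hD : (0 : ℝ) < (Δ : ℝ) + 1 := by positivity
  have hlog : 0 < Real.log 2 := Real.log_pos (by norm_num)
  have h1 : ∀ c, Real.exp L * (Real.log 2 * t c / 4 - L + 1) ≤ Real.exp (Real.log 2 * t c / 4) := by
    intro c
    have := Real.add_one_le_exp (Real.log 2 * t c / 4 - L)
    calc _ ≤ Real.exp L * Real.exp (Real.log 2 * t c / 4 - L) := by gcongr
      _ = _ := by rw [← Real.exp_add]; congr 1; ring
  have h2 : ((Δ : ℝ) + 1) * Real.exp L ≤ ∑ c, Real.exp (Real.log 2 * t c / 4) := by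
    refine le_trans ?_ (Finset.sum_le_sum fun c _ => h1 c)
    have ht' : (2 * n : ℝ) ≤ ∑ c, (t c : ℝ) := by exact_mod_cast ht
    rw [← Finset.mul_sum, Finset.sum_add_distrib, Finset.sum_sub_distrib, ← Finset.sum_div,
      ← Finset.mul_sum]
    simp only [Finset.sum_const, Finset.card_univ, Fintype.card_fin, nsmul_eq_mul, mul_one]
    push_cast
    have h3 : ((Δ : ℝ) + 1) * L = Real.log 2 * (2 * n) / 4 := by
      rw [hL]; field_simp; ring
    have h4 : Real.log 2 * (2 * n) / 4 ≤ Real.log 2 * (∑ c, (t c : ℝ)) / 4 := by gcongr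
    rw [h3, mul_comm]
    exact mul_le_mul_of_nonneg_left (by linarith) (Real.exp_pos L).le
  refine le_trans ?_ h2
  gcongr
  have h5 : (7 : ℝ) / 6 ≤ Real.exp (Real.log 2 / 2) := by
    have h6 : Real.exp (Real.log 2 / 2) ^ 2 = 2 := by
      rw [← Real.exp_nat_mul]
      push_cast
      rw [mul_div_cancel₀ _ (by norm_num), Real.exp_log (by norm_num)]
    nlinarith [Real.exp_pos (Real.log 2 / 2)]
  calc ((7 : ℝ) / 6) ^ (n / (Δ + 1)) ≤ Real.exp (Real.log 2 / 2) ^ (n / (Δ + 1)) := by gcongr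
    _ = Real.exp (((n / (Δ + 1) : ℕ) : ℝ) * (Real.log 2 / 2)) := by rw [Real.exp_nat_mul]
    _ ≤ Real.exp L := by
      apply Real.exp_le_exp.2
      have : ((n / (Δ + 1) : ℕ) : ℝ) ≤ (n : ℝ) / ((Δ + 1 : ℕ) : ℝ) := Nat.cast_div_le
      push_cast at this
      calc _ ≤ (n : ℝ) / (Δ + 1) * (Real.log 2 / 2) := by gcongr
        _ = L := by rw [hL]; field_simp

open Finset in
open Classical in
theorem aux_main {V : Type*} [Fintype V] [DecidableEq V] (G : SimpleGraph V)
    [DecidableRel G.Adj] (Δ : ℕ)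
    (hn : Δ + 2 ≤ Fintype.card V)
    (hreg : ∀ v, G.degree v = Δ) (hconn : G.Connected) :
    ((7 : ℝ) / 6) ^ (Fintype.card V / (Δ + 1)) *
      ((univ.filter (fun α : V → Fin (Δ + 1) => AuxProper G α ∧ AuxFull G α)).card : ℝ)
      ≤ ((univ.filter (fun α : V → Fin (Δ + 1) => AuxProper G α)).card : ℝ) := by
  choose a b ha hb hab hnab using aux_nonadj G Δ hn hreg hconn
  set A := univ.filter (fun α : V → Fin (Δ + 1) => AuxProper G α ∧ AuxFull G α) with hA
  set B := univ.filter (fun α : V → Fin (Δ + 1) => AuxProper G α) with hB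
  let T : Fin (Δ + 1) → (V → Fin (Δ + 1)) → Finset V :=
    fun c α => univ.filter (fun v => α v + α (a v) = c ∨ α v + α (b v) = c)
  have hTsum : ∀ α ∈ A, 2 * Fintype.card V ≤ ∑ c, (T c α).card := by
    intro α hα
    have hαf := (mem_filter.1 hα).2.2
    have h1 : ∑ c, (T c α).card = ∑ v, (univ.filter
        (fun c => α v + α (a v) = c ∨ α v + α (b v) = c)).card := by
      simp only [T, card_filter]
      exact Finset.sum_comm
    rw [h1]
    calc 2 * Fintype.card V = ∑ v : V, 2 := by simp [mul_comm]
      _ ≤ _ := by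
        apply Finset.sum_le_sum
        intro v _
        have hne : α v + α (a v) ≠ α v + α (b v) := by
          intro h
          exact hab v (aux_inj G Δ hreg α hαf v _ _ (Or.inr (ha v)) (Or.inr (hb v))
            (add_left_cancel h))
        rw [← card_pair hne]
        apply card_le_card
        intro x hx
        simp only [mem_insert, mem_singleton] at hx
        simp only [mem_filter, mem_univ, true_and]
        rcases hx with rfl | rfl <;> simp
  have hc : ∀ c, ∑ α ∈ A, Real.exp (Real.log 2 * (T c α).card / 4) ≤ (B.card : ℝ) := by
    intro c
    apply aux_fiber A B (fun α β => ∀ v, β v = α v ∨ β v = c - α v)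
    · refine ⟨fun _ _ => Or.inl rfl, ?_, ?_⟩
      · intro x y h v
        rcases h v with h | h
        · exact Or.inl h.symm
        · right; rw [h, sub_sub_cancel]
      · intro x y z h h' v
        rcases h v with h | h <;> rcases h' v with h' | h' <;> rw [h', h]
        · exact Or.inl rfl
        · exact Or.inr rfl
        · exact Or.inr rfl
        · left; rw [sub_sub_cancel]
    · intro α hα
      obtain ⟨hαp, hαf⟩ := (mem_filter.1 hα).2
      obtain ⟨q, r, hq, hr, hqr⟩ := aux_local G Δ hreg c α hαp hαf (T c α) (by
        intro v hv
        rcases (mem_filter.1 hv).2 with h | h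
        · exact ⟨a v, b v, ha v, h, hb v, (hab v).symm, hnab v⟩
        · exact ⟨b v, a v, hb v, h, ha v, hab v, fun h' => hnab v h'.symm⟩)
        (A.filter (fun β => ∀ v, β v = α v ∨ β v = c - α v))
        (B.filter (fun β => ∀ v, β v = α v ∨ β v = c - α v))
        (by intro β; simp [hA]) (by intro β; simp [hB])
      have hlog : 0 < Real.log 2 := Real.log_pos (by norm_num)
      have hpow : ∀ s : ℕ, (2 : ℝ) ^ s = Real.exp (Real.log 2 * s) := by
        intro s
        rw [mul_comm, Real.exp_nat_mul, Real.exp_log (by norm_num)]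
      have hq' : ((A.filter (fun β => ∀ v, β v = α v ∨ β v = c - α v)).card : ℝ) ≤ (2 : ℝ) ^ q := by
        exact_mod_cast hq
      have hr' : (2 : ℝ) ^ r ≤ ((B.filter (fun β => ∀ v, β v = α v ∨ β v = c - α v)).card : ℝ) := by
        exact_mod_cast hr
      have hqr' : (4 * q + (T c α).card : ℝ) ≤ 4 * r := by exact_mod_cast hqr
      refine le_trans ?_ hr'
      refine le_trans (mul_le_mul_of_nonneg_left hq' (Real.exp_pos _).le) ?_
      rw [hpow, hpow, ← Real.exp_add, Real.exp_le_exp]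
      nlinarith
  have hD : (0 : ℝ) < (Δ : ℝ) + 1 := by positivity
  have h1 : ∑ α ∈ A, ∑ c, Real.exp (Real.log 2 * (T c α).card / 4) ≤ ((Δ : ℝ) + 1) * B.card := by
    rw [Finset.sum_comm]
    refine le_trans (Finset.sum_le_sum fun c _ => hc c) ?_
    simp
  have h2 : ∑ α ∈ A, ((Δ : ℝ) + 1) * ((7 : ℝ) / 6) ^ (Fintype.card V / (Δ + 1))
      ≤ ∑ α ∈ A, ∑ c, Real.exp (Real.log 2 * (T c α).card / 4) :=
    Finset.sum_le_sum fun α hα => aux_jensen Δ _ (fun c => (T c α).card) (hTsum α hα)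
  have h3 := h2.trans h1
  rw [Finset.sum_const, nsmul_eq_mul] at h3
  refine le_of_mul_le_mul_left ?_ hD
  linarith


/-- Let `G` be a connected `Δ`-regular graph on `n ≥ Δ+2` vertices
with `Δ ≥ 3` admitting a frozen `(Δ+1)`-colouring. Then the proportion of frozen
colourings among all proper `(Δ+1)`-colourings of `G` is at most
`(6/7)^{n/(Δ+1)}`. -/
theorem stmt_19 {V : Type*} [Fintype V] [DecidableEq V] (G : SimpleGraph V)
    [DecidableRel G.Adj] (Δ : ℕ) (hΔ : 3 ≤ Δ)
    (hn : Δ + 2 ≤ Fintype.card V)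
    (hreg : ∀ v, G.degree v = Δ) (hconn : G.Connected)
    (hfrozen : ∃ α : V → Fin (Δ + 1), (∀ u v, G.Adj u v → α u ≠ α v) ∧
        (∀ v c, ∃ u, (u = v ∨ G.Adj v u) ∧ α u = c)) :
    (Nat.card {α : V → Fin (Δ + 1) //
        (∀ u v, G.Adj u v → α u ≠ α v) ∧
        (∀ v c, ∃ u, (u = v ∨ G.Adj v u) ∧ α u = c)} : ℝ) ≤
      ((6 : ℝ) / 7) ^ (Fintype.card V / (Δ + 1)) *
        (Nat.card {α : V → Fin (Δ + 1) // ∀ u v, G.Adj u v → α u ≠ α v} : ℝ) := by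
  classical
  have h := aux_main G Δ hn hreg hconn
  have h1 : Nat.card {α : V → Fin (Δ + 1) //
        (∀ u v, G.Adj u v → α u ≠ α v) ∧
        (∀ v c, ∃ u, (u = v ∨ G.Adj v u) ∧ α u = c)} =
      (Finset.univ.filter (fun α : V → Fin (Δ + 1) => AuxProper G α ∧ AuxFull G α)).card := by
    exact Nat.subtype_card _ (by intro x; rw [Finset.mem_filter]; simp only [Finset.mem_univ, true_and]; rfl)
  have h2 : Nat.card {α : V → Fin (Δ + 1) // ∀ u v, G.Adj u v → α u ≠ α v} =
      (Finset.univ.filter (fun α : V → Fin (Δ + 1) => AuxProper G α)).card := by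
    exact Nat.subtype_card _ (by intro x; rw [Finset.mem_filter]; simp only [Finset.mem_univ, true_and]; rfl)
  rw [h1, h2]
  have h3 : ((6 : ℝ) / 7) ^ (Fintype.card V / (Δ + 1)) *
      ((7 : ℝ) / 6) ^ (Fintype.card V / (Δ + 1)) = 1 := by
    rw [← mul_pow]; norm_num
  have h4 := mul_le_mul_of_nonneg_left h
    (show (0 : ℝ) ≤ ((6 : ℝ) / 7) ^ (Fintype.card V / (Δ + 1)) by positivity)
  rw [← mul_assoc, h3, one_mul] at h4
  convert h4
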